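/- Let T ∈ ℝ^(r×m) and g : Fin r → Fin m. Then the system T_{i,g(i)} - x_{g(i)} ≥ T_{i,k} - x_k (for all i, all k ≠ g(i)) is feasible in x ∈ ℝ^m if and only if for every list of distinct indices i_1 < ... < i_l in Fin r such that g(i_1), ..., g(i_l) are pairwise distinct, the sum Σ_z T_{i_z, g(i_z)} equals the maximum over all permutations σ of {1,...,l} of Σ_z T_{i_z, g(i_{σ(z)})}. -/

import Mathlib

/-- cost of a path ending in column k -/
def pcost {r m : ℕ} (T : Matrix (Fin r) (Fin m) ℝ) (g : Fin r → Fin m) : Fin m → List (Fin r) → ℝ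
  | _, [] => 0
  | k, i :: L => (T i (g i) - T i k) + pcost T g (g i) L

def pend {r : ℕ} : Fin r → List (Fin r) → Fin r
  | b, [] => b
  | _, i :: L => pend i L

theorem pcost_append {r m : ℕ} (T : Matrix (Fin r) (Fin m) ℝ) (g : Fin r → Fin m)
    (a : Fin r) (B : List (Fin r)) : ∀ (A : List (Fin r)) (b : Fin r),
    pcost T g (g b) (A ++ a :: B) =
      pcost T g (g b) A + (T a (g a) - T a (g (pend b A))) + pcost T g (g a) B
  | [], b => by simp [pcost, pend]
  | i :: A, b => by
    simp only [List.cons_append, pcost, pend]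
    rw [pcost_append T g a B A i]; ring

theorem pcost_perm {r m : ℕ} (T : Matrix (Fin r) (Fin m) ℝ) (g : Fin r → Fin m) :
    ∀ (L : List (Fin r)) (b : Fin r), (b :: L).Nodup →
    ∃ σ : Equiv.Perm (Fin r), (∀ z, z ∉ b :: L → σ z = z) ∧ σ b = pend b L ∧
      pcost T g (g b) L = (L.map (fun z => T z (g z) - T z (g (σ z)))).sum
  | [], b, _ => ⟨1, by simp, by simp [pend], by simp [pcost]⟩
  | i :: L, b, h => by
    have h' := h
    rw [List.nodup_cons] at h
    obtain ⟨hb, hn⟩ := h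
    obtain ⟨σ, h1, h2, h3⟩ := pcost_perm T g L i hn
    have hn' := List.nodup_cons.1 hn
    refine ⟨σ * Equiv.swap b i, ?_, ?_, ?_⟩
    · intro z hz
      simp only [List.mem_cons, not_or] at hz
      rw [Equiv.Perm.mul_apply, Equiv.swap_apply_of_ne_of_ne hz.1 hz.2.1]
      exact h1 z (by simp [hz])
    · simp [pend, h2]
    · simp only [pcost, List.map_cons, List.sum_cons, Equiv.Perm.mul_apply,
        Equiv.swap_apply_right, h1 b hb, h3]
      congr 2
      apply List.map_congr_left
      intro z hz
      rw [Equiv.swap_apply_of_ne_of_ne]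
      · rintro rfl; exact hb (by simp [hz])
      · rintro rfl; exact hn'.1 hz

theorem perm_nonneg {r m : ℕ} (T : Matrix (Fin r) (Fin m) ℝ) (g : Fin r → Fin m)
    (H : ∀ (l : ℕ) (ι : Fin l → Fin r), StrictMono ι → Function.Injective (g ∘ ι) →
      ∀ σ : Equiv.Perm (Fin l), ∑ z, T (ι z) (g (ι (σ z))) ≤ ∑ z, T (ι z) (g (ι z)))
    (S : Finset (Fin r)) (hg : Set.InjOn g S) (σ : Equiv.Perm (Fin r))
    (hσ : ∀ z, z ∉ S → σ z = z) :
    0 ≤ ∑ z ∈ S, (T z (g z) - T z (g (σ z))) := by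
  have hS : ∀ z, σ z ∈ S ↔ z ∈ S := by
    intro z
    constructor
    · intro h
      by_contra hz
      rw [hσ z hz] at h
      exact hz h
    · intro h
      by_contra hz
      have := σ.injective (hσ _ hz)
      rw [this] at hz
      exact hz h
  let e := S.orderIsoOfFin rfl
  have key := H S.card (fun z => (e z : Fin r)) (fun a b h => e.strictMono h)
    (fun a b h => e.injective (Subtype.ext (hg (e a).2 (e b).2 h)))
    ((e.toEquiv.trans (σ.subtypePerm hS)).trans e.toEquiv.symm)
  have conv : ∀ f : Fin r → ℝ, ∑ z, f (e z) = ∑ z ∈ S, f z := by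
    intro f
    rw [← Finset.sum_coe_sort S]
    exact Equiv.sum_comp e.toEquiv (fun z : S => f z)
  have k1 := conv (fun z => T z (g z))
  have k2 := conv (fun z => T z (g (σ z)))
  rw [Finset.sum_sub_distrib, ← k1, ← k2]
  simp at key
  simpa using key

theorem stmt_1 {r m : ℕ} (T : Matrix (Fin r) (Fin m) ℝ) (g : Fin r → Fin m) :
    (∃ x : Fin m → ℝ, ∀ i k, k ≠ g i → T i (g i) - x (g i) ≥ T i k - x k) ↔
    (∀ (l : ℕ) (ι : Fin l → Fin r), StrictMono ι → Function.Injective (g ∘ ι) →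
      (∑ z, T (ι z) (g (ι z))) =
        Finset.univ.sup' (Finset.univ_nonempty)
          (fun σ : Equiv.Perm (Fin l) => ∑ z, T (ι z) (g (ι (σ z))))) := by
  constructor
  · rintro ⟨x, hx⟩ l ι - -
    apply le_antisymm
    · exact Finset.le_sup' (fun σ : Equiv.Perm (Fin l) => ∑ z, T (ι z) (g (ι (σ z))))
        (Finset.mem_univ 1)
    · apply Finset.sup'_le
      intro σ _
      have h1 : ∑ z, (T (ι z) (g (ι (σ z))) - x (g (ι (σ z)))) ≤
          ∑ z, (T (ι z) (g (ι z)) - x (g (ι z))) := by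
        apply Finset.sum_le_sum
        intro z _
        by_cases h : g (ι (σ z)) = g (ι z)
        · rw [h]
        · exact hx _ _ h
      rw [Finset.sum_sub_distrib, Finset.sum_sub_distrib,
        Equiv.sum_comp σ (fun z => x (g (ι z)))] at h1
      linarith
  · intro H
    have H' : ∀ (l : ℕ) (ι : Fin l → Fin r), StrictMono ι → Function.Injective (g ∘ ι) →
      ∀ σ : Equiv.Perm (Fin l), ∑ z, T (ι z) (g (ι (σ z))) ≤ ∑ z, T (ι z) (g (ι z)) := by
      intro l ι h1 h2 σ
      rw [H l ι h1 h2]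
      exact Finset.le_sup' (fun σ : Equiv.Perm (Fin l) => ∑ z, T (ι z) (g (ι (σ z))))
        (Finset.mem_univ σ)
    have hmin : ∀ k : Fin m, ∃ L : List (Fin r), (k :: L.map g).Nodup ∧
        ∀ L' : List (Fin r), (k :: L'.map g).Nodup → pcost T g k L ≤ pcost T g k L' := by
      intro k
      have hfin : {L : List (Fin r) | (k :: L.map g).Nodup}.Finite := by
        apply (List.finite_length_le (Fin r) r).subset
        intro L hL
        have : L.Nodup := List.Nodup.of_map g (List.nodup_cons.1 hL).2
        simpa using this.length_le_card
      obtain ⟨L, hL, h⟩ := Set.exists_min_image _ (pcost T g k) hfin ⟨[], by simp⟩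
      exact ⟨L, hL, h⟩
    choose P hP hPmin using hmin
    refine ⟨fun k => - pcost T g k (P k), fun i k hk => ?_⟩
    have main : pcost T g k (P k) ≤ pcost T g k (i :: P (g i)) := by
      have hnd : ((i :: P (g i)).map g).Nodup := by simpa using hP (g i)
      generalize i :: P (g i) = Q at hnd
      by_cases hmem : k ∈ Q.map g
      · obtain ⟨a, ha, rfl⟩ := List.mem_map.1 hmem
        obtain ⟨A, B, rfl⟩ := List.append_of_mem ha
        rw [pcost_append]
        simp only [List.map_append, List.map_cons] at hnd
        have hB : (g a :: B.map g).Nodup := (List.nodup_append.1 hnd).2.1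
        have hA : ((a :: A).map g).Nodup := by
          have := List.nodup_middle.1 hnd
          rw [← List.cons_append] at this
          simpa using (List.nodup_append.1 this).1
        have h1 := hPmin (g a) B hB
        have hA' := List.Nodup.of_map g hA
        obtain ⟨σ, s1, s2, s3⟩ := pcost_perm T g A a hA'
        have := perm_nonneg T g H' (a :: A).toFinset
          (by
            intro x hx y hy hxy
            exact List.inj_on_of_nodup_map hA (by simpa using hx) (by simpa using hy) hxy)
          σ (by intro z hz; exact s1 z (by simpa using hz))
        rw [List.sum_toFinset _ hA', List.map_cons, List.sum_cons, s2, ← s3] at this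
        linarith
      · exact hPmin k Q (List.nodup_cons.2 ⟨hmem, hnd⟩)
    simp only [pcost] at main
    linarith
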